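/- Let A be a central simple algebra of degree m over a field F, let 1 ≤ i < m, and let E/F be a field extension. Then the generalized Severi–Brauer variety SB_i(A) has an E-point if and only if ind(A ⊗_F E) divides i. -/

import Mathlib

open scoped TensorProduct

/-- Brauer equivalence of two algebras over a field `K`:
`Mₙ(A) ≅ Mₘ(B)` as `K`-algebras for some `n, m ≥ 1`. -/
def BrEquiv (K : Type) [Field K] (A B : Type) [Ring A] [Algebra K A]
    [Ring B] [Algebra K B] : Prop :=
  ∃ n m : ℕ, 0 < n ∧ 0 < m ∧
    Nonempty (Matrix (Fin n) (Fin n) A ≃ₐ[K] Matrix (Fin m) (Fin m) B)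

/-- `A` is a central simple algebra over the field `K`. -/
def IsCSA (K : Type) [Field K] (A : Type) [Ring A] [Algebra K A] : Prop :=
  Algebra.IsCentral K A ∧ IsSimpleRing A ∧ FiniteDimensional K A

/-- Witness that the division algebra in the Brauer class of `A` has degree `d`. -/
structure DivAlgRep (K : Type) [Field K] (A : Type) [Ring A] [Algebra K A] (d : ℕ) where
  D : Type
  [divD : DivisionRing D]
  [algD : Algebra K D]
  equiv : BrEquiv K A D
  rank : Module.finrank K D = d * d

attribute [instance] DivAlgRep.divD DivAlgRep.algD

/-- The index of a central simple algebra: the degree of the division algebra in its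
Brauer class. -/
noncomputable def csIndex (K : Type) [Field K] (A : Type) [Ring A] [Algebra K A] : ℕ :=
  sInf {d : ℕ | Nonempty (DivAlgRep K A d)}

/-- The period of a central simple algebra: the order of its class in the Brauer group,
i.e. the least `p ≥ 1` with `A^{⊗p}` split. -/
noncomputable def csPeriod (K : Type) [Field K] (A : Type) [Ring A] [Algebra K A] : ℕ :=
  sInf {p : ℕ | 0 < p ∧ BrEquiv K (⨂[K] (_ : Fin p), A) K}

/-- `Br_l dim(K) ≤ d`: for every finite extension `L/K` and every central simple
`L`-algebra `A` of period a power of `l`, `ind(A) ∣ per(A)^d`. -/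
def BrDimLE (K : Type) [Field K] (l : ℕ) (d : ℕ) : Prop :=
  ∀ (L : Type) [Field L] [Algebra K L], FiniteDimensional K L →
    ∀ (A : Type) [Ring A] [Algebra L A], IsCSA L A →
      (∃ e : ℕ, csPeriod L A = l ^ e) → csIndex L A ∣ csPeriod L A ^ d


theorem aux_repr_mul {F A E : Type} [Field F] [Ring A] [Algebra F A] [Field E] [Algebra F E]
    {ι : Type} (b : Module.Basis ι F E) (x : A ⊗[F] E) (a : A) (j : ι) :
    (Algebra.TensorProduct.basis A b).repr (x * (a ⊗ₜ[F] (1:E))) j =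
      (Algebra.TensorProduct.basis A b).repr x j * a := by
  induction x using TensorProduct.induction_on with
  | zero => simp
  | tmul c e =>
    simp only [Algebra.TensorProduct.tmul_mul_tmul, mul_one,
      Algebra.TensorProduct.basis_repr_tmul, Finsupp.smul_apply, Finsupp.mapRange_apply,
      smul_eq_mul, mul_assoc, Algebra.commutes]
  | add x y hx hy => simp [add_mul, hx, hy]

theorem aux_repr_mul_left {F A E : Type} [Field F] [Ring A] [Algebra F A] [Field E] [Algebra F E]
    {ι : Type} (b : Module.Basis ι F E) (x : A ⊗[F] E) (a : A) (j : ι) :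
    (Algebra.TensorProduct.basis A b).repr ((a ⊗ₜ[F] (1:E)) * x) j =
      a * (Algebra.TensorProduct.basis A b).repr x j := by
  induction x using TensorProduct.induction_on with
  | zero => simp
  | tmul c e =>
    simp only [Algebra.TensorProduct.tmul_mul_tmul, one_mul,
      Algebra.TensorProduct.basis_repr_tmul, Finsupp.smul_apply, Finsupp.mapRange_apply,
      smul_eq_mul, mul_assoc]
  | add x y hx hy => simp [mul_add, hx, hy]

theorem aux_simple (F A E : Type) [Field F] [Ring A] [Algebra F A] [Field E] [Algebra F E]
    [Algebra.IsCentral F A] [IsSimpleRing A] : IsSimpleRing (A ⊗[F] E) := by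
  classical
  let b := Module.Basis.ofVectorSpace F E
  let B := Algebra.TensorProduct.basis A b
  have hnt : Nontrivial (A ⊗[F] E) := inferInstance
  refine IsSimpleRing.of_eq_bot_or_eq_top fun I => ?_
  rw [or_iff_not_imp_left, ← I.one_mem_iff]
  intro hI
  obtain ⟨x0, hx0, hx0' : x0 ≠ 0⟩ := SetLike.exists_of_lt (bot_lt_iff_ne_bot.mpr hI : ⊥ < I)
  have hex : ∃ n : ℕ, ∃ x ∈ I, x ≠ 0 ∧ (B.repr x).support.card = n := ⟨_, x0, hx0, hx0', rfl⟩
  obtain ⟨x, hxI, hx, hn⟩ := Nat.find_spec hex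
  have hmin : ∀ y ∈ I, (B.repr y).support.card < (B.repr x).support.card → y = 0 := by
    intro y hy hlt
    by_contra hne
    rw [hn] at hlt
    exact Nat.find_min hex hlt ⟨y, hy, hne, rfl⟩
  have hrx : B.repr x ≠ 0 := by simpa using hx
  obtain ⟨j0, hj0⟩ := Finsupp.support_nonempty_iff.mpr hrx
  -- the ideal of leading coefficients
  let C : TwoSidedIdeal A := TwoSidedIdeal.mk'
    {a | ∃ y ∈ I, (∀ j, B.repr x j = 0 → B.repr y j = 0) ∧ B.repr y j0 = a}
    ⟨0, I.zero_mem, by simp, by simp⟩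
    (by
      rintro _ _ ⟨y, hy, hs, rfl⟩ ⟨z, hz, ht, rfl⟩
      exact ⟨y + z, I.add_mem hy hz, fun j hj => by simp [hs j hj, ht j hj], by simp⟩)
    (by
      rintro _ ⟨y, hy, hs, rfl⟩
      exact ⟨-y, I.neg_mem hy, fun j hj => by simp [hs j hj], by simp⟩)
    (by
      rintro a _ ⟨y, hy, hs, rfl⟩
      exact ⟨(a ⊗ₜ 1) * y, I.mul_mem_left _ _ hy,
        fun j hj => by rw [aux_repr_mul_left]; erw [hs j hj]; simp, aux_repr_mul_left _ _ _ _⟩)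
    (by
      rintro _ a ⟨y, hy, hs, rfl⟩
      exact ⟨y * (a ⊗ₜ 1), I.mul_mem_right _ _ hy,
        fun j hj => by rw [aux_repr_mul]; erw [hs j hj]; simp, aux_repr_mul _ _ _ _⟩)
  have hC : (1 : A) ∈ C := by
    refine IsSimpleRing.one_mem_of_ne_zero_mem C (x := B.repr x j0) (by simpa using hj0) ?_
    exact (TwoSidedIdeal.mem_mk' _ _ _ _ _ _ _).mpr ⟨x, hxI, fun _ h => h, rfl⟩
  obtain ⟨y, hyI, hys, hy1⟩ := (TwoSidedIdeal.mem_mk' _ _ _ _ _ _ _).mp hC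
  have hcomm : ∀ a : A, (a ⊗ₜ 1) * y - y * (a ⊗ₜ 1) = 0 := by
    intro a
    refine hmin _ (I.sub_mem (I.mul_mem_left _ _ hyI) (I.mul_mem_right _ _ hyI)) ?_
    have key : ∀ j, B.repr ((a ⊗ₜ 1) * y - y * (a ⊗ₜ 1)) j
        = a * B.repr y j - B.repr y j * a := by
      intro j
      rw [map_sub, Finsupp.sub_apply]
      exact congrArg₂ _ (aux_repr_mul_left _ _ _ _) (aux_repr_mul _ _ _ _)
    refine Finset.card_lt_card ((Finset.ssubset_iff_of_subset ?_).mpr ⟨j0, hj0, ?_⟩)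
    · intro j hj
      rw [Finsupp.mem_support_iff] at hj ⊢
      intro h
      apply hj
      rw [key, hys j h]; simp
    · rw [Finsupp.notMem_support_iff, key, hy1]; simp
  have hcen : ∀ j, ∃ f : F, algebraMap F A f = B.repr y j := by
    intro j
    have : B.repr y j ∈ Subalgebra.center F A := by
      rw [Subalgebra.mem_center_iff]
      intro a
      have h := congrArg (fun z => B.repr z j) (sub_eq_zero.mp (hcomm a))
      exact (aux_repr_mul_left b y a j).symm.trans (h.trans (aux_repr_mul b y a j))
    rw [Algebra.IsCentral.center_eq_bot] at this
    exact Algebra.mem_bot.mp this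
  choose f hf using hcen
  have hy : ∃ e : E, y = 1 ⊗ₜ e := by
    refine ⟨(B.repr y).support.sum fun j => f j • b j, ?_⟩
    rw [TensorProduct.tmul_sum]
    conv_lhs => rw [← B.linearCombination_repr y, Finsupp.linearCombination_apply, Finsupp.sum]
    refine Finset.sum_congr rfl fun j _ => ?_
    rw [← hf, Algebra.TensorProduct.basis_apply, TensorProduct.smul_tmul', TensorProduct.tmul_smul,
      TensorProduct.smul_tmul', smul_eq_mul, mul_one, Algebra.algebraMap_eq_smul_one]
  obtain ⟨e, rfl⟩ := hy
  have he : e ≠ 0 := by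
    rintro rfl
    rw [TensorProduct.tmul_zero, map_zero] at hy1
    simp at hy1
  have := I.mul_mem_left ((1:A) ⊗ₜ e⁻¹) _ hyI
  rwa [Algebra.TensorProduct.tmul_mul_tmul, inv_mul_cancel₀ he, one_mul] at this

def colIdeal (E D : Type) [Field E] [DivisionRing D] [Algebra E D] (N : ℕ)
    (W : Submodule Dᵐᵒᵖ (Fin N → D)) : Submodule E (Matrix (Fin N) (Fin N) D) where
  carrier := {M | ∀ j, (fun a => M a j) ∈ W}
  zero_mem' := fun j => W.zero_mem
  add_mem' := fun hx hy j => W.add_mem (hx j) (hy j)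
  smul_mem' := fun c x hx j => by
    have := W.smul_mem (MulOpposite.op (algebraMap E D c)) (hx j)
    convert this using 1
    ext a
    simp [Algebra.smul_def, Algebra.commutes]

theorem colIdeal_mul {E D : Type} [Field E] [DivisionRing D] [Algebra E D] {N : ℕ}
    (W : Submodule Dᵐᵒᵖ (Fin N → D)) (x : Matrix (Fin N) (Fin N) D) (hx : x ∈ colIdeal E D N W)
    (y : Matrix (Fin N) (Fin N) D) : x * y ∈ colIdeal E D N W := by
  intro j
  have : (fun a => (x * y) a j) = ∑ k, MulOpposite.op (y k j) • (fun a => x a k) := by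
    ext a
    simp [Matrix.mul_apply]
  rw [this]
  exact W.sum_mem fun k _ => W.smul_mem _ (hx k)

def colEquiv (E D : Type) [Field E] [DivisionRing D] [Algebra E D] (N : ℕ)
    (W : Submodule Dᵐᵒᵖ (Fin N → D)) : colIdeal E D N W ≃ₗ[E] (Fin N → W.restrictScalars E) where
  toFun M j := ⟨fun a => M.1 a j, M.2 j⟩
  invFun v := ⟨Matrix.of fun a j => (v j).1 a, fun j => (v j).2⟩
  map_add' _ _ := rfl
  map_smul' _ _ := rfl
  left_inv _ := rfl
  right_inv _ := rfl

theorem colIdeal_finrank (E D : Type) [Field E] [DivisionRing D] [Algebra E D]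
    [Module.Finite E D] (N : ℕ) (W : Submodule Dᵐᵒᵖ (Fin N → D)) :
    Module.finrank E (colIdeal E D N W) =
      Module.finrank Dᵐᵒᵖ W * (N * Module.finrank E D) := by
  have : Module.Finite E (W.restrictScalars E) := inferInstance
  rw [(colEquiv E D N W).finrank_eq, Module.finrank_pi_fintype]
  have h : Module.finrank E Dᵐᵒᵖ * Module.finrank Dᵐᵒᵖ W = Module.finrank E W :=
    Module.finrank_mul_finrank E Dᵐᵒᵖ W
  have h2 : Module.finrank E Dᵐᵒᵖ = Module.finrank E D :=
    (MulOpposite.opLinearEquiv E (M := D)).symm.finrank_eq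
  change ∑ i : Fin N, Module.finrank E W = _
  rw [← h, h2]
  simp; ring

theorem ideal_eq_colIdeal {E D : Type} [Field E] [DivisionRing D] [Algebra E D] {N : ℕ}
    (I : Submodule E (Matrix (Fin N) (Fin N) D)) (hI : ∀ x ∈ I, ∀ y, x * y ∈ I) (hN : 0 < N) :
    ∃ W, I = colIdeal E D N W := by
  let j0 : Fin N := ⟨0, hN⟩
  let W : Submodule Dᵐᵒᵖ (Fin N → D) :=
    { carrier := {v | Matrix.vecMulVec v (Pi.single j0 1) ∈ I}
      zero_mem' := by simp
      add_mem' := fun {a b} ha hb => by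
        simp only [Set.mem_ofPred_eq, Matrix.add_vecMulVec] at *
        exact I.add_mem ha hb
      smul_mem' := fun c v hv => by
        have := hI _ hv (Matrix.single j0 j0 c.unop)
        simp only [Set.mem_ofPred_eq]
        convert this using 1
        ext a b
        rw [Matrix.mul_apply, Finset.sum_eq_single j0]
        · by_cases h : b = j0
          · subst h; simp [Matrix.vecMulVec_apply]
          · simp [Matrix.vecMulVec_apply, h, Matrix.single_apply, Ne.symm h]
        · intro k _ hk
          simp [Matrix.vecMulVec_apply, hk]
        · simp }
  refine ⟨W, le_antisymm ?_ ?_⟩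
  · intro M hM j
    have := hI _ hM (Matrix.single j j0 1)
    change Matrix.vecMulVec (fun a => M a j) (Pi.single j0 1) ∈ I
    convert this using 1
    ext a b
    rw [Matrix.mul_apply, Finset.sum_eq_single j]
    · by_cases h : b = j0
      · subst h; simp [Matrix.vecMulVec_apply]
      · simp [Matrix.vecMulVec_apply, h, Matrix.single_apply, Ne.symm h]
    · intro k _ hk
      simp [Matrix.single_apply, Ne.symm hk]
    · simp
  · intro M hM
    have : M = ∑ j, Matrix.vecMulVec (fun a => M a j) (Pi.single j0 1) *
        Matrix.single j0 j (1 : D) := by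
      ext a b
      rw [Matrix.sum_apply, Finset.sum_eq_single b]
      · rw [Matrix.mul_apply, Finset.sum_eq_single j0]
        · simp [Matrix.vecMulVec_apply]
        · intro k _ hk
          simp [Matrix.vecMulVec_apply, hk]
        · simp
      · intro k _ hk
        rw [Matrix.mul_apply]
        simp [Matrix.single_apply, hk]
      · simp
    rw [this]
    exact I.sum_mem fun j _ => hI _ (hM j) _

theorem exists_sub_finrank (D : Type) [DivisionRing D] (N k : ℕ) (hk : k ≤ N) :
    ∃ W : Submodule Dᵐᵒᵖ (Fin N → D), Module.finrank Dᵐᵒᵖ W = k := by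
  let f : (Fin k → Dᵐᵒᵖ) →ₗ[Dᵐᵒᵖ] (Fin N → D) :=
    { toFun := fun v a => if h : a.1 < k then (v ⟨a.1, h⟩).unop else 0
      map_add' := fun v w => by ext a; by_cases h : a.1 < k <;> simp [h]
      map_smul' := fun c w => by ext a; by_cases h : a.1 < k <;> simp [h] }
  have hf : Function.Injective f := by
    intro v w h
    ext a
    have := congrFun h ⟨a.1, by omega⟩
    apply MulOpposite.unop_injective
    simpa [f] using this
  refine ⟨LinearMap.range f, ?_⟩
  rw [LinearMap.finrank_range_of_inj hf]
  simp

/-- `R` has a right ideal of dimension `r`. -/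
def HasRI (E R : Type) [Field E] [Ring R] [Algebra E R] (r : ℕ) : Prop :=
  ∃ I : Submodule E R, (∀ x ∈ I, ∀ y : R, x * y ∈ I) ∧ Module.finrank E I = r

theorem HasRI.congr {E R S : Type} [Field E] [Ring R] [Algebra E R] [Ring S] [Algebra E S]
    (e : R ≃ₐ[E] S) {r : ℕ} (h : HasRI E R r) : HasRI E S r := by
  obtain ⟨I, hI, hr⟩ := h
  refine ⟨I.map e.toLinearMap, ?_, ?_⟩
  · rintro _ ⟨x, hx, rfl⟩ y
    exact ⟨x * e.symm y, hI x hx _, by simp⟩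
  · rw [← hr]
    exact LinearEquiv.finrank_map_eq e.toLinearEquiv I

theorem hasRI_dvd {E D : Type} [Field E] [DivisionRing D] [Algebra E D] [Module.Finite E D] {N : ℕ} (hN : 0 < N)
    {r : ℕ} (h : HasRI E (Matrix (Fin N) (Fin N) D) r) : N * Module.finrank E D ∣ r := by
  obtain ⟨I, hI, hr⟩ := h
  obtain ⟨W, rfl⟩ := ideal_eq_colIdeal I hI hN
  rw [← hr, colIdeal_finrank]
  exact dvd_mul_left _ _

theorem hasRI_mul (E D : Type) [Field E] [DivisionRing D] [Algebra E D] [Module.Finite E D] (N k : ℕ) (hk : k ≤ N) :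
    HasRI E (Matrix (Fin N) (Fin N) D) (k * (N * Module.finrank E D)) := by
  obtain ⟨W, hW⟩ := exists_sub_finrank D N k hk
  exact ⟨colIdeal E D N W, colIdeal_mul W, by rw [colIdeal_finrank, hW]⟩

theorem matrix_unique {E D D' : Type} [Field E] [DivisionRing D] [Algebra E D] [Module.Finite E D]
    [DivisionRing D'] [Algebra E D'] [Module.Finite E D'] {N N' : ℕ} (hN : 0 < N) (hN' : 0 < N')
    (hfin : 0 < Module.finrank E D)
    (e : Matrix (Fin N) (Fin N) D ≃ₐ[E] Matrix (Fin N') (Fin N') D') :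
    N = N' ∧ Module.finrank E D = Module.finrank E D' := by
  have h1 := hasRI_dvd hN' (HasRI.congr e (hasRI_mul E D N 1 hN))
  have h2 := hasRI_dvd hN (HasRI.congr e.symm (hasRI_mul E D' N' 1 hN'))
  rw [one_mul] at h1 h2
  have h3 := Nat.dvd_antisymm h2 h1
  have h4 := e.toLinearEquiv.finrank_eq
  rw [Module.finrank_matrix, Module.finrank_matrix] at h4
  simp only [Fintype.card_fin, mul_assoc] at h4
  rw [← h3] at h4
  have h5 : N = N' := Nat.eq_of_mul_eq_mul_right (Nat.mul_pos hN hfin) h4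
  subst h5
  exact ⟨rfl, Nat.eq_of_mul_eq_mul_left hN h3⟩

theorem finite_of_matrix (E D : Type) [Field E] [DivisionRing D] [Algebra E D] (n : ℕ)
    (hn : 0 < n) [Module.Finite E (Matrix (Fin n) (Fin n) D)] : Module.Finite E D :=
  .of_surjective (Matrix.entryLinearMap E _ (⟨0, hn⟩ : Fin n) (⟨0, hn⟩ : Fin n))
    fun f => ⟨fun _ _ => f, rfl⟩

/-- If `R ≅ Mₙ(D)` with `dim D = d²`, then the index of `R` is `d`. -/
theorem csIndex_eq {E R D : Type} [Field E] [Ring R] [Algebra E R] [DivisionRing D] [Algebra E D]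
    [Module.Finite E D] {n d : ℕ} (hn : 0 < n) (e : R ≃ₐ[E] Matrix (Fin n) (Fin n) D)
    (hd : Module.finrank E D = d * d) : csIndex E R = d := by
  have key : {d' : ℕ | Nonempty (DivAlgRep E R d')} = {d} := by
    ext d'
    constructor
    · rintro ⟨⟨D', ⟨a, b, ha, hb, ⟨f⟩⟩, hr⟩⟩
      let g : Matrix (Fin (a * n)) (Fin (a * n)) D ≃ₐ[E] Matrix (Fin b) (Fin b) D' :=
        (Matrix.reindexAlgEquiv E D finProdFinEquiv.symm).trans
          ((Matrix.compAlgEquiv (Fin a) (Fin n) D E).symm.trans (e.symm.mapMatrix.trans f))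
      have : Module.Finite E (Matrix (Fin b) (Fin b) D') := Module.Finite.equiv g.toLinearEquiv
      have : Module.Finite E D' := finite_of_matrix E D' b hb
      have h := (matrix_unique (Nat.mul_pos ha hn) hb Module.finrank_pos g).2
      rw [hd, hr] at h
      exact (Nat.mul_self_inj.mp h).symm
    · rintro rfl
      exact ⟨⟨D, ⟨1, 1 * n, one_pos, Nat.mul_pos one_pos hn,
        ⟨e.mapMatrix.trans ((Matrix.compAlgEquiv (Fin 1) (Fin n) D E).trans
          (Matrix.reindexAlgEquiv E D finProdFinEquiv))⟩⟩, hd⟩⟩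
  rw [csIndex, key, csInf_singleton]

/-- let `A` be a central simple algebra of degree `m` over `F`,
`1 ≤ i < m`, and `E/F` a field extension.  The generalized Severi–Brauer variety
`SB_i(A)` has an `E`-point — i.e. `A ⊗_F E` has a right ideal of reduced dimension `i`
which is a direct summand — if and only if `ind(A ⊗_F E) ∣ i`. -/
theorem stmt18 (F : Type) [Field F] (A : Type) [Ring A] [Algebra F A]
    (hA : IsCSA F A) (m : ℕ) (hdeg : Module.finrank F A = m * m)
    (i : ℕ) (hi1 : 1 ≤ i) (him : i < m)
    (E : Type) [Field E] [Algebra F E] :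
    (∃ I : Submodule E (E ⊗[F] A),
        (∀ x ∈ I, ∀ y : E ⊗[F] A, x * y ∈ I) ∧
        (∃ J : Submodule E (E ⊗[F] A), IsCompl I J) ∧
        Module.finrank E I = i * m) ↔
      csIndex E (E ⊗[F] A) ∣ i := by
  obtain ⟨hc, hs, hf⟩ := hA
  have hs' : IsSimpleRing (E ⊗[F] A) :=
    IsSimpleRing.of_ringEquiv (Algebra.TensorProduct.comm F A E).toRingEquiv (aux_simple F A E)
  have : Module.Finite E (E ⊗[F] A) := inferInstance
  have : IsArtinianRing (E ⊗[F] A) := IsArtinianRing.of_finite E _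
  obtain ⟨n, hn0, D, _, _, _, ⟨e⟩⟩ :=
    IsSimpleRing.exists_algEquiv_matrix_divisionRing_finite E (E ⊗[F] A)
  have hn : 0 < n := Nat.pos_of_ne_zero hn0.out
  have hdim : n * n * Module.finrank E D = m * m := by
    have h := e.toLinearEquiv.finrank_eq
    rw [Module.finrank_baseChange, hdeg, Module.finrank_matrix] at h
    simpa using h.symm
  have hnm : n ∣ m := (Nat.pow_dvd_pow_iff two_ne_zero).mp (by rw [sq, sq]; exact ⟨_, hdim.symm⟩)
  obtain ⟨d, rfl⟩ := hnm
  have hd : Module.finrank E D = d * d := by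
    apply Nat.eq_of_mul_eq_mul_left (Nat.mul_pos hn hn)
    rw [hdim]; ring
  have hd0 : 0 < d := by
    rcases Nat.eq_zero_or_pos d with rfl | h
    · simp at him
    · exact h
  rw [csIndex_eq hn e hd]
  have hp : 0 < n * d := Nat.mul_pos hn hd0
  constructor
  · rintro ⟨I, hI, -, hr⟩
    have h := hasRI_dvd hn (HasRI.congr e ⟨I, hI, hr⟩)
    rw [hd, show n * (d * d) = d * (n * d) by ring] at h
    exact Nat.dvd_of_mul_dvd_mul_right hp h
  · rintro ⟨k, rfl⟩
    have hk : k ≤ n := by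
      rw [mul_comm n d] at him
      exact (Nat.lt_of_mul_lt_mul_left him).le
    obtain ⟨I, hI, hr⟩ := HasRI.congr e.symm (hasRI_mul E D n k hk)
    refine ⟨I, hI, Submodule.exists_isCompl I, ?_⟩
    rw [hr, hd]; ring
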